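/- Let n ≥ 2 and let μ, ν be nonzero finite Borel measures on ℝⁿ with compact support such that I₁(μ) < ∞ and I₁(ν) < ∞. Then the set of unit vectors e ∈ S^{n−1} for which π_e(spt μ) ∩ π_e(spt ν) has positive one-dimensional Lebesgue measure has positive (n−1)-dimensional Hausdorff measure in S^{n−1}. -/

import Mathlib

open MeasureTheory Metric Set
open scoped ENNReal RealInnerProductSpace

/-- The topological support of a measure: points all of whose neighbourhoods
have positive measure. -/
def sptm (n : ℕ) (μ : MeasureTheory.Measure (EuclideanSpace ℝ (Fin n))) :
    Set (EuclideanSpace ℝ (Fin n)) :=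
  {x | ∀ r > 0, 0 < μ (Metric.ball x r)}

/-- The `s`-energy `I_s(μ) = ∬ |x-y|^{-s} dμ(x) dμ(y)` of a measure. -/
noncomputable def energyI (n : ℕ) (s : ℝ)
    (μ : MeasureTheory.Measure (EuclideanSpace ℝ (Fin n))) : ℝ≥0∞ :=
  ∫⁻ x, ∫⁻ y, (‖x - y‖₊ : ℝ≥0∞) ^ (-s) ∂μ ∂μ

/-!
Write `π_v x = ⟪x, v⟫` and let `v` be a standard Gaussian vector. For fixed `x ≠ y`, the probability
that `|π_v x - π_v y| ≤ δ` is comparable to `δ / |x - y|` for small `δ`. By Fubini, the Gaussian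
average of `(2δ)⁻¹ (π_v μ × π_v ν) {|s - t| ≤ δ}` is therefore bounded below by a positive constant
when `μ` and `ν` live on compact sets `K` and `L`, and for `μ = ν` it is bounded above by the
`1`-energy. The upper bound, Fatou's lemma and differentiation of measures on the line show that,
for almost every `v`, the measures `π_v μ` and `π_v ν` have densities in `L²`, with norms square
integrable in `v`. At scale `δ` the near-diagonal mass only sees the part of these densities in the
intersection of the `δ`-neighbourhoods of `π_v K` and `π_v L`, which shrinks to `π_v K ∩ π_v L`. If
that set were null for almost every `v`, the normalized near-diagonal mass would tend to zero and,
by dominated convergence, so would its average: a contradiction.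

To pass from Gaussian vectors to unit vectors, note that the part in the unit ball of the cone over
a set of directions of diameter `d` is covered by about `1 / d` balls of radius `2 d`. Hence the
cone over an `H^{n-1}`-null set of directions is Lebesgue null, and so Gaussian null.
-/

open ProbabilityTheory Filter Topology Module

section Gaussian

theorem gaussianPDF_zero_le_of_abs_le (v : NNReal) {x y : ℝ} (h : |x| ≤ |y|) :
    gaussianPDF 0 v y ≤ gaussianPDF 0 v x := by
  refine ENNReal.ofReal_le_ofReal ?_
  have hsq : x ^ 2 ≤ y ^ 2 := sq_le_sq.2 h
  simp only [gaussianPDFReal, sub_zero]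
  gcongr

theorem gaussianPDF_mul_le_gaussianReal_Icc {v : NNReal} (hv : v ≠ 0) (a : ℝ) :
    gaussianPDF 0 v a * ENNReal.ofReal (2 * a) ≤ gaussianReal 0 v (Icc (-a) a) := by
  have hvol : ENNReal.ofReal (2 * a) = volume (Icc (-a) a) := by
    rw [Real.volume_Icc, sub_neg_eq_add, two_mul]
  rw [gaussianReal_apply _ hv, hvol, ← setLIntegral_const]
  exact setLIntegral_mono' measurableSet_Icc fun x hx =>
    gaussianPDF_zero_le_of_abs_le v ((abs_le.2 hx).trans (le_abs_self a))

theorem gaussianReal_le_smul_volume {v : NNReal} (hv : v ≠ 0) :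
    gaussianReal 0 v ≤ gaussianPDF 0 v 0 • volume := by
  rw [gaussianReal_of_var_ne_zero _ hv, ← withDensity_const]
  exact withDensity_mono (Eventually.of_forall fun x =>
    gaussianPDF_zero_le_of_abs_le v (by simp))

theorem gaussianPDF_zero_one_zero_le_one : gaussianPDF 0 1 0 ≤ 1 := by
  have hsqrt : 1 ≤ √(2 * Real.pi) := Real.one_le_sqrt.2 (by linarith [Real.pi_gt_three])
  rw [gaussianPDF, ENNReal.ofReal_le_one]
  simpa [gaussianPDFReal, mul_inv] using inv_le_one_of_one_le₀ hsqrt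

theorem pi_fin_absolutelyContinuous {n : ℕ} {α : Fin n → Type*} [∀ i, MeasurableSpace (α i)]
    {μ ν : ∀ i, Measure (α i)} [∀ i, SigmaFinite (μ i)] [∀ i, SigmaFinite (ν i)]
    (h : ∀ i, μ i ≪ ν i) : Measure.pi μ ≪ Measure.pi ν := by
  induction n with
  | zero => rw [Measure.pi_of_empty, Measure.pi_of_empty]
  | succ n ih =>
    rw [← (measurePreserving_piFinSuccAbove μ 0).symm.map_eq,
      ← (measurePreserving_piFinSuccAbove ν 0).symm.map_eq]
    exact ((h 0).prod (ih fun i => h _)).map (MeasurableEquiv.measurable _)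

theorem pi_absolutelyContinuous {ι : Type*} [Fintype ι] {α : ι → Type*}
    [∀ i, MeasurableSpace (α i)] {μ ν : ∀ i, Measure (α i)} [∀ i, SigmaFinite (μ i)]
    [∀ i, SigmaFinite (ν i)] (h : ∀ i, μ i ≪ ν i) : Measure.pi μ ≪ Measure.pi ν := by
  have e := (Fintype.equivFin ι).symm
  rw [← (measurePreserving_piCongrLeft μ e).map_eq, ← (measurePreserving_piCongrLeft ν e).map_eq]
  exact (pi_fin_absolutelyContinuous fun i => h (e i)).map (MeasurableEquiv.measurable _)

variable {E : Type*} [NormedAddCommGroup E] [InnerProductSpace ℝ E] [FiniteDimensional ℝ E]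
  [MeasurableSpace E] [BorelSpace E]

theorem stdGaussian_absolutelyContinuous_volume : stdGaussian E ≪ volume := by
  set b := stdOrthonormalBasis ℝ E
  have hvol : MeasurePreserving (fun x : Fin (finrank ℝ E) → ℝ => ∑ i, x i • b i) := by
    simpa [Function.comp_def, ← b.sum_repr_symm] using
      b.measurePreserving_repr_symm.comp (PiLp.volume_preserving_toLp (Fin (finrank ℝ E)))
  rw [stdGaussian, ← hvol.map_eq]
  exact (pi_absolutelyContinuous fun _ =>
    gaussianReal_absolutelyContinuous 0 one_ne_zero).map hvol.measurable

theorem map_inner_stdGaussian {u : E} (hu : ‖u‖ = 1) :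
    (stdGaussian E).map (⟪u, ·⟫) = gaussianReal 0 1 := by
  have h := IsGaussian.map_eq_gaussianReal (μ := stdGaussian E) (innerSL ℝ u)
  rw [integral_strongDual_stdGaussian, variance_dual_stdGaussian, innerSL_apply_norm, hu] at h
  simpa using h

theorem stdGaussian_abs_inner_le {z : E} (hz : z ≠ 0) (δ : ℝ) :
    stdGaussian E {v | |⟪z, v⟫| ≤ δ} = gaussianReal 0 1 (Icc (-(δ / ‖z‖)) (δ / ‖z‖)) := by
  have hz' : 0 < ‖z‖ := norm_pos_iff.2 hz
  rw [← map_inner_stdGaussian (norm_smul_inv_norm (𝕜 := ℝ) hz),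
    Measure.map_apply (by fun_prop) measurableSet_Icc]
  congr 1
  ext v
  rw [mem_preimage, mem_Icc, ← abs_le, RCLike.ofReal_real_eq_id, id_eq, real_inner_smul_left,
    abs_mul, abs_inv, abs_norm, inv_mul_eq_div, div_le_div_iff_of_pos_right hz', mem_ofPred_eq]

theorem stdGaussian_abs_inner_le_le_mul_inv_enorm (z : E) {δ : ℝ} (hδ : 0 < δ) :
    stdGaussian E {v | |⟪z, v⟫| ≤ δ} ≤ ENNReal.ofReal (2 * δ) * ‖z‖ₑ⁻¹ := by
  rcases eq_or_ne z 0 with rfl | hz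
  · simp [hδ]
  calc stdGaussian E {v | |⟪z, v⟫| ≤ δ}
      ≤ volume (Icc (-(δ / ‖z‖)) (δ / ‖z‖)) := by
        rw [stdGaussian_abs_inner_le hz]
        refine (gaussianReal_le_smul_volume one_ne_zero _).trans ?_
        exact mul_le_of_le_one_left' gaussianPDF_zero_one_zero_le_one
    _ = ENNReal.ofReal (2 * δ) * ‖z‖ₑ⁻¹ := by
        rw [Real.volume_Icc, sub_neg_eq_add, ← two_mul, ← mul_div_assoc,
          ENNReal.ofReal_div_of_pos (norm_pos_iff.2 hz), ofReal_norm, ENNReal.div_eq_inv_mul,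
          mul_comm]

theorem mul_le_stdGaussian_abs_inner_le {R δ : ℝ} (hδ : 0 < δ) (hδR : δ ≤ R) {z : E}
    (hz : ‖z‖ ≤ R) :
    ENNReal.ofReal (2 * δ) * (gaussianPDF 0 1 1 * ENNReal.ofReal R⁻¹) ≤
      stdGaussian E {v | |⟪z, v⟫| ≤ δ} := by
  have hR : 0 < R := hδ.trans_le hδR
  calc ENNReal.ofReal (2 * δ) * (gaussianPDF 0 1 1 * ENNReal.ofReal R⁻¹)
      = gaussianPDF 0 1 1 * ENNReal.ofReal (2 * (δ / R)) := by
        rw [mul_left_comm, ← ENNReal.ofReal_mul (by positivity), mul_assoc, div_eq_mul_inv]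
    _ ≤ gaussianPDF 0 1 (δ / R) * ENNReal.ofReal (2 * (δ / R)) := by
        gcongr
        refine gaussianPDF_zero_le_of_abs_le 1 ?_
        rwa [abs_one, abs_of_pos (by positivity), div_le_one hR]
    _ ≤ gaussianReal 0 1 (Icc (-(δ / R)) (δ / R)) :=
        gaussianPDF_mul_le_gaussianReal_Icc one_ne_zero _
    _ ≤ stdGaussian E {v | |⟪z, v⟫| ≤ δ} := by
        rcases eq_or_ne z 0 with rfl | hz0
        · simp [hδ.le, prob_le_one]
        · have : 0 < ‖z‖ := norm_pos_iff.2 hz0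
          rw [stdGaussian_abs_inner_le hz0]
          gcongr

end Gaussian

section NearDiagonal

variable {X : Type*} [PseudoMetricSpace X] [SecondCountableTopology X] [MeasurableSpace X]
  [BorelSpace X]

theorem prod_dist_le_eq_lintegral (m₁ m₂ : Measure X) [SFinite m₂] (δ : ℝ) :
    (m₁.prod m₂) {p | dist p.1 p.2 ≤ δ} = ∫⁻ x, m₂ (closedBall x δ) ∂m₁ := by
  rw [Measure.prod_apply (measurableSet_le measurable_dist measurable_const)]
  simp only [preimage_ofPred_eq, dist_comm, closedBall]

theorem measurable_measure_closedBall (m : Measure X) [SFinite m] (δ : ℝ) :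
    Measurable fun x => m (closedBall x δ) := by
  have h := measurable_measure_prodMk_left (ν := m)
    (measurableSet_le (measurable_dist (α := X)) (measurable_const (a := δ)))
  simpa only [preimage_ofPred_eq, dist_comm, closedBall] using h

theorem prod_dist_le_le_restrict {m₁ m₂ : Measure X} [SFinite m₁] [SFinite m₂] {A B : Set X}
    (hA : m₁ Aᶜ = 0) (hB : m₂ Bᶜ = 0) (δ : ℝ) :
    (m₁.prod m₂) {p | dist p.1 p.2 ≤ δ} ≤
      ((m₁.restrict (cthickening δ A ∩ cthickening δ B)).prod
        (m₂.restrict (cthickening δ A ∩ cthickening δ B))) {p | dist p.1 p.2 ≤ δ} := by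
  rw [Measure.prod_restrict,
    Measure.restrict_apply (measurableSet_le measurable_dist measurable_const)]
  refine measure_mono_ae ?_
  filter_upwards [Measure.quasiMeasurePreserving_fst.ae (mem_ae_iff.2 hA),
    Measure.quasiMeasurePreserving_snd.ae (mem_ae_iff.2 hB)] with p hpA hpB (hp : dist p.1 p.2 ≤ δ)
  exact ⟨hp, ⟨self_subset_cthickening _ hpA, mem_cthickening_of_dist_le _ _ _ _ hpB hp⟩,
    mem_cthickening_of_dist_le _ _ _ _ hpA (dist_comm p.1 p.2 ▸ hp),
    self_subset_cthickening _ hpB⟩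

theorem setLIntegral_prod_dist_le_fst_le {ρ : Measure X} [SFinite ρ] {δ : ℝ} {C : ℝ≥0∞}
    (hρ : ∀ x, ρ (closedBall x δ) ≤ C) {f : X → ℝ≥0∞} (hf : Measurable f) :
    ∫⁻ p in {p : X × X | dist p.1 p.2 ≤ δ}, f p.1 ∂(ρ.prod ρ) ≤ C * ∫⁻ x, f x ∂ρ := by
  have hD : MeasurableSet {p : X × X | dist p.1 p.2 ≤ δ} :=
    measurableSet_le measurable_dist measurable_const
  rw [← withDensity_apply _ hD, ← prod_withDensity_left hf, prod_dist_le_eq_lintegral,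
    ← lintegral_const_mul C hf]
  rw [lintegral_withDensity_eq_lintegral_mul _ hf (measurable_measure_closedBall ρ δ)]
  exact lintegral_mono fun x => (mul_comm _ _).trans_le (mul_le_mul_left (hρ x) _)

theorem withDensity_prod_dist_le_le {ρ : Measure X} [SFinite ρ] {δ : ℝ} {C : ℝ≥0∞}
    (hρ : ∀ x, ρ (closedBall x δ) ≤ C) {f g : X → ℝ≥0∞} (hf : Measurable f) (hg : Measurable g) :
    ((ρ.withDensity f).prod (ρ.withDensity g)) {p | dist p.1 p.2 ≤ δ} ≤
      C * ((∫⁻ x, f x ^ 2 ∂ρ) + ∫⁻ x, g x ^ 2 ∂ρ) := by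
  set D : Set (X × X) := {p | dist p.1 p.2 ≤ δ}
  have hD : MeasurableSet D := measurableSet_le measurable_dist measurable_const
  have hmul_le (a b : ℝ≥0∞) : a * b ≤ a ^ 2 + b ^ 2 := by
    rcases le_total a b with h | h
    · exact (mul_le_mul_left h b).trans ((sq b).symm.trans_le le_add_self)
    · exact (mul_le_mul_right h a).trans ((sq a).symm.trans_le le_self_add)
  have hswap : ∫⁻ p in D, g p.2 ^ 2 ∂(ρ.prod ρ) = ∫⁻ p in D, g p.1 ^ 2 ∂(ρ.prod ρ) := by
    have hpre : Prod.swap ⁻¹' D = D := by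
      ext p
      simp only [D, mem_preimage, mem_ofPred_eq, Prod.fst_swap, Prod.snd_swap, dist_comm]
    have h := (Measure.measurePreserving_swap (μ := ρ) (ν := ρ)).setLIntegral_comp_preimage hD
      ((hg.comp measurable_fst).pow_const 2)
    rwa [hpre] at h
  calc ((ρ.withDensity f).prod (ρ.withDensity g)) D
      = ∫⁻ p in D, f p.1 * g p.2 ∂(ρ.prod ρ) := by
        rw [prod_withDensity hf hg, withDensity_apply _ hD]
    _ ≤ ∫⁻ p in D, (f p.1 ^ 2 + g p.2 ^ 2) ∂(ρ.prod ρ) := lintegral_mono fun p => hmul_le _ _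
    _ = (∫⁻ p in D, f p.1 ^ 2 ∂(ρ.prod ρ)) + ∫⁻ p in D, g p.1 ^ 2 ∂(ρ.prod ρ) := by
        rw [lintegral_add_left (by fun_prop), hswap]
    _ ≤ C * ((∫⁻ x, f x ^ 2 ∂ρ) + ∫⁻ x, g x ^ 2 ∂ρ) := by
        rw [mul_add]
        exact add_le_add (setLIntegral_prod_dist_le_fst_le hρ (hf.pow_const 2))
          (setLIntegral_prod_dist_le_fst_le hρ (hg.pow_const 2))

theorem tendsto_measure_cthickening_inter_cthickening {X : Type*} [PseudoEMetricSpace X]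
    [MeasurableSpace X] [OpensMeasurableSpace X] (ρ : Measure X) [IsFiniteMeasure ρ] (A B : Set X) :
    Tendsto (fun δ => ρ (cthickening δ A ∩ cthickening δ B)) (𝓝[>] 0)
      (𝓝 (ρ (closure A ∩ closure B))) := by
  have hInter : ⋂ δ > (0 : ℝ), cthickening δ A ∩ cthickening δ B = closure A ∩ closure B := by
    simp only [closure_eq_iInter_cthickening, iInter_inter_distrib]
  rw [← hInter]
  exact tendsto_measure_biInter_gt
    (fun δ _ => (isClosed_cthickening.inter isClosed_cthickening).nullMeasurableSet)
    (fun _ _ _ hij => inter_subset_inter (cthickening_mono hij A) (cthickening_mono hij B))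
    ⟨1, one_pos, measure_ne_top _ _⟩

end NearDiagonal

section DiagonalRatio

/-- The normalized mass `(2δ)⁻¹ (m₁ × m₂) {(s, t) : |s - t| ≤ δ}` that two measures on the line give
to a neighbourhood of the diagonal. For measures with densities `f, g ∈ L²` it tends to `∫ f g`
as `δ → 0`. -/
noncomputable def diagonalRatio (m₁ m₂ : Measure ℝ) (δ : ℝ) : ℝ≥0∞ :=
  (ENNReal.ofReal (2 * δ))⁻¹ * (m₁.prod m₂) {p | dist p.1 p.2 ≤ δ}

theorem lintegral_inv_rnDeriv_volume_le_liminf (m : Measure ℝ) [IsFiniteMeasure m] {δ : ℕ → ℝ}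
    (hδ : Tendsto δ atTop (𝓝[>] 0)) :
    ∫⁻ t, ((volume : Measure ℝ).rnDeriv m t)⁻¹ ∂m ≤
      liminf (fun k => diagonalRatio m m (δ k)) atTop := by
  have hlim : ∀ᵐ t ∂m, Tendsto (fun k => (ENNReal.ofReal (2 * δ k))⁻¹ * m (closedBall t (δ k)))
      atTop (𝓝 ((volume : Measure ℝ).rnDeriv m t)⁻¹) := by
    filter_upwards [Besicovitch.ae_tendsto_rnDeriv (volume : Measure ℝ) m] with t ht
    refine (tendsto_inv_iff.2 (ht.comp hδ)).congr' ?_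
    filter_upwards [hδ.eventually self_mem_nhdsWithin] with k (hk : 0 < δ k)
    rw [Function.comp_apply, Real.volume_closedBall,
      ENNReal.inv_div (Or.inr ENNReal.ofReal_ne_top) (Or.inr (by simp [hk])),
      ENNReal.div_eq_inv_mul]
  calc ∫⁻ t, ((volume : Measure ℝ).rnDeriv m t)⁻¹ ∂m
      = ∫⁻ t, liminf (fun k => (ENNReal.ofReal (2 * δ k))⁻¹ * m (closedBall t (δ k))) atTop ∂m :=
        lintegral_congr_ae (hlim.mono fun t ht => ht.liminf_eq.symm)
    _ ≤ liminf (fun k => ∫⁻ t, (ENNReal.ofReal (2 * δ k))⁻¹ * m (closedBall t (δ k)) ∂m) atTop :=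
        lintegral_liminf_le fun k => (measurable_measure_closedBall m (δ k)).const_mul _
    _ = liminf (fun k => diagonalRatio m m (δ k)) atTop := by
        simp only [lintegral_const_mul _ (measurable_measure_closedBall m _), diagonalRatio,
          prod_dist_le_eq_lintegral]

theorem absolutelyContinuous_of_ae_rnDeriv_ne_zero {α : Type*} [MeasurableSpace α]
    {μ m : Measure α} (h : ∀ᵐ x ∂m, μ.rnDeriv m x ≠ 0) : m ≪ μ :=
  (withDensity_absolutelyContinuous' (Measure.measurable_rnDeriv μ m).aemeasurable h).trans
    (Measure.absolutelyContinuous_of_le (Measure.withDensity_rnDeriv_le μ m))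

theorem absolutelyContinuous_volume_of_liminf_diagonalRatio_ne_top (m : Measure ℝ)
    [IsFiniteMeasure m] {δ : ℕ → ℝ} (hδ : Tendsto δ atTop (𝓝[>] 0))
    (h : liminf (fun k => diagonalRatio m m (δ k)) atTop ≠ ∞) : m ≪ volume := by
  refine absolutelyContinuous_of_ae_rnDeriv_ne_zero ?_
  filter_upwards [ae_lt_top (Measure.measurable_rnDeriv volume m).inv
    ((lintegral_inv_rnDeriv_volume_le_liminf m hδ).trans_lt h.lt_top).ne] with t ht
  exact (ENNReal.inv_lt_top.1 ht).ne'

theorem lintegral_rnDeriv_volume_sq_le_liminf {m : Measure ℝ} [IsFiniteMeasure m]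
    (hm : m ≪ volume) {δ : ℕ → ℝ} (hδ : Tendsto δ atTop (𝓝[>] 0)) :
    ∫⁻ t, m.rnDeriv volume t ^ 2 ≤ liminf (fun k => diagonalRatio m m (δ k)) atTop := by
  refine le_of_eq_of_le ?_ (lintegral_inv_rnDeriv_volume_le_liminf m hδ)
  simp only [sq]
  rw [lintegral_rnDeriv_mul hm (Measure.measurable_rnDeriv m volume).aemeasurable]
  exact lintegral_congr_ae (Measure.inv_rnDeriv' hm).symm

variable {m₁ m₂ : Measure ℝ} [IsFiniteMeasure m₁] [IsFiniteMeasure m₂]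

theorem diagonalRatio_le_setLIntegral_rnDeriv_sq (h₁ : m₁ ≪ volume) (h₂ : m₂ ≪ volume)
    {A B : Set ℝ} (hA : m₁ Aᶜ = 0) (hB : m₂ Bᶜ = 0) {δ : ℝ} (hδ : 0 < δ) :
    diagonalRatio m₁ m₂ δ ≤
      (∫⁻ t in cthickening δ A ∩ cthickening δ B, m₁.rnDeriv volume t ^ 2) +
        ∫⁻ t in cthickening δ A ∩ cthickening δ B, m₂.rnDeriv volume t ^ 2 := by
  have hK : MeasurableSet (cthickening δ A ∩ cthickening δ B) :=
    (isClosed_cthickening.inter isClosed_cthickening).measurableSet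
  set K := cthickening δ A ∩ cthickening δ B
  have hball (t : ℝ) : (volume.restrict K) (closedBall t δ) ≤ ENNReal.ofReal (2 * δ) :=
    (Measure.restrict_apply_le _ _).trans_eq (Real.volume_closedBall t δ)
  have hrestrict {m : Measure ℝ} [IsFiniteMeasure m] (hm : m ≪ volume) :
      m.restrict K = (volume.restrict K).withDensity (m.rnDeriv volume) := by
    rw [← restrict_withDensity hK, Measure.withDensity_rnDeriv_eq m volume hm]
  have hle := (prod_dist_le_le_restrict hA hB δ).trans_eq
    (by rw [hrestrict h₁, hrestrict h₂]) |>.trans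
    (withDensity_prod_dist_le_le hball (Measure.measurable_rnDeriv m₁ volume)
      (Measure.measurable_rnDeriv m₂ volume))
  rw [diagonalRatio, ENNReal.inv_mul_le_iff (by simp [hδ]) ENNReal.ofReal_ne_top]
  exact hle

theorem diagonalRatio_le_lintegral_rnDeriv_sq (h₁ : m₁ ≪ volume) (h₂ : m₂ ≪ volume) {δ : ℝ}
    (hδ : 0 < δ) :
    diagonalRatio m₁ m₂ δ ≤ (∫⁻ t, m₁.rnDeriv volume t ^ 2) + ∫⁻ t, m₂.rnDeriv volume t ^ 2 :=
  (diagonalRatio_le_setLIntegral_rnDeriv_sq (A := univ) (B := univ) h₁ h₂ (by simp) (by simp)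
    hδ).trans (add_le_add (setLIntegral_le_lintegral _ _) (setLIntegral_le_lintegral _ _))

theorem tendsto_diagonalRatio_zero (h₁ : m₁ ≪ volume) (h₂ : m₂ ≪ volume)
    (hL₁ : ∫⁻ t, m₁.rnDeriv volume t ^ 2 ≠ ∞) (hL₂ : ∫⁻ t, m₂.rnDeriv volume t ^ 2 ≠ ∞)
    {A B : Set ℝ} (hA : IsClosed A) (hB : IsClosed B) (hmA : m₁ Aᶜ = 0) (hmB : m₂ Bᶜ = 0)
    (hAB : volume (A ∩ B) = 0) : Tendsto (diagonalRatio m₁ m₂) (𝓝[>] 0) (𝓝 0) := by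
  have hzero {f : ℝ → ℝ≥0∞} (hf : ∫⁻ t, f t ^ 2 ≠ ∞) :
      Tendsto (fun δ => ∫⁻ t in cthickening δ A ∩ cthickening δ B, f t ^ 2) (𝓝[>] 0) (𝓝 0) := by
    have := isFiniteMeasure_withDensity hf
    have h := tendsto_measure_cthickening_inter_cthickening
      (volume.withDensity fun t => f t ^ 2) A B
    rw [hA.closure_eq, hB.closure_eq, withDensity_absolutelyContinuous _ _ hAB] at h
    exact h.congr fun δ =>
      withDensity_apply _ (isClosed_cthickening.inter isClosed_cthickening).measurableSet
  refine tendsto_of_tendsto_of_tendsto_of_le_of_le' tendsto_const_nhds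
    (by simpa using (hzero hL₁).add (hzero hL₂)) (Eventually.of_forall fun _ => zero_le) ?_
  filter_upwards [self_mem_nhdsWithin] with δ hδ
  exact diagonalRatio_le_setLIntegral_rnDeriv_sq h₁ h₂ hmA hmB hδ

end DiagonalRatio

section Cone

variable {E : Type*} [NormedAddCommGroup E] [NormedSpace ℝ E]

theorem norm_normalize_le_one (v : E) : ‖NormedSpace.normalize v‖ ≤ 1 := by
  rcases eq_or_ne v 0 with rfl | hv
  · simp
  · exact (NormedSpace.norm_normalize hv).le

theorem measurable_normalize [MeasurableSpace E] [BorelSpace E] [SecondCountableTopology E] :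
    Measurable (NormedSpace.normalize : E → E) := by
  unfold NormedSpace.normalize
  fun_prop

theorem ball_inter_preimage_normalize_subset_iUnion_closedBall {s : Set E} {d : ℝ} (hd : 0 < d)
    (hs : ∀ x ∈ s, ∀ y ∈ s, dist x y ≤ d) {x : E} (hx : x ∈ s) (hx1 : ‖x‖ ≤ 1) :
    ball 0 1 ∩ NormedSpace.normalize ⁻¹' s ⊆
      ⋃ i ∈ Finset.range (⌊d⁻¹⌋₊ + 1), closedBall ((i * d) • x) (2 * d) := by
  rintro v ⟨hv, hvs⟩
  have hv1 : ‖v‖ < 1 := by simpa using hv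
  have hfloor : |‖v‖ - ⌊‖v‖ / d⌋₊ * d| ≤ d := by
    have hle : ⌊‖v‖ / d⌋₊ * d ≤ ‖v‖ := (le_div_iff₀ hd).1 (Nat.floor_le (by positivity))
    have hlt : ‖v‖ < (⌊‖v‖ / d⌋₊ + 1) * d := (div_lt_iff₀ hd).1 (Nat.lt_floor_add_one _)
    rw [abs_of_nonneg] <;> linarith
  simp only [mem_iUnion, Finset.mem_range, mem_closedBall, dist_eq_norm]
  refine ⟨⌊‖v‖ / d⌋₊, Nat.lt_succ_of_le (Nat.floor_le_floor ?_), ?_⟩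
  · rw [div_eq_mul_inv]
    exact mul_le_of_le_one_left (by positivity) hv1.le
  · calc ‖v - (⌊‖v‖ / d⌋₊ * d) • x‖
        = ‖‖v‖ • (NormedSpace.normalize v - x) + (‖v‖ - ⌊‖v‖ / d⌋₊ * d) • x‖ := by
          rw [smul_sub, NormedSpace.norm_smul_normalize, sub_smul, sub_add_sub_cancel]
      _ ≤ ‖v‖ * ‖NormedSpace.normalize v - x‖ + |‖v‖ - ⌊‖v‖ / d⌋₊ * d| * ‖x‖ := by
          refine (norm_add_le _ _).trans_eq ?_
          rw [norm_smul, norm_smul, norm_norm, Real.norm_eq_abs]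
      _ ≤ 1 * d + d * 1 := by
          gcongr
          exact dist_eq_norm (NormedSpace.normalize v) x ▸ hs _ hvs x hx
      _ = 2 * d := by ring

variable [FiniteDimensional ℝ E] [MeasurableSpace E] [BorelSpace E] (μ : Measure E)
  [μ.IsAddHaarMeasure]

theorem addHaar_ball_inter_preimage_normalize_le {s : Set E} {d : ℝ} (hd : 0 < d) (hd1 : d ≤ 1)
    (hs : ∀ x ∈ s, ∀ y ∈ s, dist x y ≤ d) :
    μ (ball 0 1 ∩ NormedSpace.normalize ⁻¹' s) ≤
      2 ^ (finrank ℝ E + 1) * μ (ball 0 1) * ENNReal.ofReal d ^ ((finrank ℝ E : ℝ) - 1) := by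
  rcases (ball 0 1 ∩ NormedSpace.normalize ⁻¹' s).eq_empty_or_nonempty with hempty | ⟨w, -, hw⟩
  · simp [hempty]
  set u := NormedSpace.normalize w
  have hcard : ((⌊d⁻¹⌋₊ + 1 : ℕ) : ℝ) ≤ 2 / d := by
    have hone : 1 ≤ d⁻¹ := (one_le_inv₀ hd).2 hd1
    have := Nat.floor_le (inv_nonneg.2 hd.le)
    push_cast
    rw [div_eq_mul_inv]
    linarith
  have hreal : 2 / d * (2 * d) ^ finrank ℝ E =
      2 ^ (finrank ℝ E + 1) * d ^ ((finrank ℝ E : ℝ) - 1) := by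
    rw [Real.rpow_sub_one hd.ne', Real.rpow_natCast, mul_pow]
    ring
  calc μ (ball 0 1 ∩ NormedSpace.normalize ⁻¹' s)
      ≤ μ (⋃ i ∈ Finset.range (⌊d⁻¹⌋₊ + 1), closedBall ((i * d) • u) (2 * d)) :=
        measure_mono (ball_inter_preimage_normalize_subset_iUnion_closedBall hd hs hw
          (norm_normalize_le_one w))
    _ ≤ ∑ i ∈ Finset.range (⌊d⁻¹⌋₊ + 1), μ (closedBall ((i * d) • u) (2 * d)) :=
        measure_biUnion_finset_le _ _
    _ = (⌊d⁻¹⌋₊ + 1 : ℕ) * (ENNReal.ofReal ((2 * d) ^ finrank ℝ E) * μ (ball 0 1)) := by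
        simp only [Measure.addHaar_closedBall μ _ (by positivity : 0 ≤ 2 * d), Finset.sum_const,
          Finset.card_range, nsmul_eq_mul]
    _ ≤ ENNReal.ofReal (2 / d) * (ENNReal.ofReal ((2 * d) ^ finrank ℝ E) * μ (ball 0 1)) := by
        gcongr
        rw [← ENNReal.ofReal_natCast]
        exact ENNReal.ofReal_le_ofReal hcard
    _ = 2 ^ (finrank ℝ E + 1) * μ (ball 0 1) * ENNReal.ofReal d ^ ((finrank ℝ E : ℝ) - 1) := by
        rw [← mul_assoc, ← ENNReal.ofReal_mul (by positivity), hreal,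
          ENNReal.ofReal_mul (by positivity), ENNReal.ofReal_pow zero_le_two, ENNReal.ofReal_ofNat,
          ENNReal.ofReal_rpow_of_pos hd, mul_right_comm]

theorem addHaar_ball_inter_preimage_normalize_le_ediam {s : Set E} (hs : ediam s < 1) :
    μ (ball 0 1 ∩ NormedSpace.normalize ⁻¹' s) ≤
      2 ^ (finrank ℝ E + 1) * μ (ball 0 1) * ediam s ^ ((finrank ℝ E : ℝ) - 1) := by
  have hC : 2 ^ (finrank ℝ E + 1) * μ (ball 0 1) ≠ ∞ :=
    ENNReal.mul_ne_top (by finiteness) measure_ball_lt_top.ne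
  have hlim : Tendsto (fun r : ℝ≥0∞ =>
      2 ^ (finrank ℝ E + 1) * μ (ball 0 1) * r ^ ((finrank ℝ E : ℝ) - 1)) (𝓝[>] (ediam s))
      (𝓝 (2 ^ (finrank ℝ E + 1) * μ (ball 0 1) * ediam s ^ ((finrank ℝ E : ℝ) - 1))) :=
    ENNReal.Tendsto.const_mul
      (ENNReal.continuous_rpow_const.tendsto _ |>.mono_left nhdsWithin_le_nhds) (Or.inr hC)
  -- The bound for positive radii is passed to the limit because `ediam s` may be zero.
  have : (𝓝[>] (ediam s)).NeBot := nhdsGT_neBot_of_exists_gt ⟨1, hs⟩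
  refine ge_of_tendsto hlim ?_
  filter_upwards [Ioo_mem_nhdsGT hs] with r ⟨hr, hr1⟩
  have hrtop : r ≠ ∞ := (hr1.trans_le le_top).ne
  have hpos : 0 < r.toReal := ENNReal.toReal_pos (bot_le.trans_lt hr).ne' hrtop
  have h := addHaar_ball_inter_preimage_normalize_le μ (s := s) hpos
    (ENNReal.toReal_le_of_le_ofReal zero_le_one (by simpa using hr1.le)) fun x hx y hy => by
      rw [dist_edist]
      exact ENNReal.toReal_mono hrtop ((edist_le_ediam_of_mem hx hy).trans hr.le)
  rwa [ENNReal.ofReal_toReal hrtop] at h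

theorem map_normalize_addHaar_ball_le_hausdorffMeasure :
    ((2 ^ (finrank ℝ E + 1) * μ (ball 0 1))⁻¹ •
      (μ.restrict (ball 0 1)).map NormedSpace.normalize) ≤ μH[(finrank ℝ E : ℝ) - 1] := by
  have hC : 2 ^ (finrank ℝ E + 1) * μ (ball 0 1) ≠ ∞ :=
    ENNReal.mul_ne_top (by finiteness) measure_ball_lt_top.ne
  have hC0 : 2 ^ (finrank ℝ E + 1) * μ (ball 0 1) ≠ 0 :=
    mul_ne_zero (by simp) (measure_ball_pos μ 0 one_pos).ne'
  refine Measure.le_hausdorffMeasure _ _ 2⁻¹ (by simp) fun s hs => ?_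
  rw [Measure.smul_apply, smul_eq_mul, ENNReal.inv_mul_le_iff hC0 hC, ← ediam_closure s]
  refine (measure_mono subset_closure).trans ?_
  rw [Measure.map_apply measurable_normalize isClosed_closure.measurableSet,
    Measure.restrict_apply (measurable_normalize isClosed_closure.measurableSet), inter_comm]
  exact addHaar_ball_inter_preimage_normalize_le_ediam μ
    ((ediam_closure s).trans_le hs |>.trans_lt (by simp))

theorem ae_normalize_notMem_of_hausdorffMeasure_eq_zero {s : Set E}
    (hs : μH[(finrank ℝ E : ℝ) - 1] s = 0) : ∀ᵐ v ∂μ, NormedSpace.normalize v ∉ s := by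
  have hball : μ (ball 0 1 ∩ NormedSpace.normalize ⁻¹' s) = 0 := by
    have hC : 2 ^ (finrank ℝ E + 1) * μ (ball 0 1) ≠ ∞ :=
      ENNReal.mul_ne_top (by finiteness) measure_ball_lt_top.ne
    have hle := map_normalize_addHaar_ball_le_hausdorffMeasure μ s
    rw [hs, Measure.smul_apply, smul_eq_mul, nonpos_iff_eq_zero, mul_eq_zero,
      or_iff_right (ENNReal.inv_ne_zero.2 hC)] at hle
    rw [inter_comm, ← Measure.restrict_apply₀' measurableSet_ball.nullMeasurableSet]
    exact Measure.preimage_null_of_map_null measurable_normalize.aemeasurable hle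
  have hcover : NormedSpace.normalize ⁻¹' s ⊆
      ⋃ k : ℕ, ((k + 1 : ℝ)⁻¹ • ·) ⁻¹' (ball (0 : E) 1 ∩ NormedSpace.normalize ⁻¹' s) := by
    intro v hv
    obtain ⟨k, hk⟩ := exists_nat_gt ‖v‖
    have hk' : (0 : ℝ) < (k + 1 : ℝ)⁻¹ := by positivity
    refine mem_iUnion.2 ⟨k, ?_, ?_⟩
    · rw [mem_ball_zero_iff, norm_smul, Real.norm_of_nonneg hk'.le,
        inv_mul_lt_one₀ (by positivity)]
      linarith
    · rwa [mem_preimage, NormedSpace.normalize_smul_of_pos hk']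
  simp only [ae_iff, not_not]
  refine measure_mono_null hcover (measure_iUnion_null fun k => ?_)
  rw [Measure.addHaar_preimage_smul μ (by positivity), hball, mul_zero]

end Cone

section RieszEnergy

/-- The Riesz `s`-energy `∬ |x - y|⁻ˢ dμ(x) dμ(y)`. Since `0 ^ (-s) = ∞` in `ℝ≥0∞` for `s > 0`, the
diagonal is included, so atoms make the energy infinite. -/
noncomputable def rieszEnergy {X : Type*} [SeminormedAddCommGroup X] [MeasurableSpace X] (s : ℝ)
    (μ : Measure X) : ℝ≥0∞ :=
  ∫⁻ x, ∫⁻ y, ‖x - y‖ₑ ^ (-s) ∂μ ∂μ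

variable {X : Type*} [SeminormedAddCommGroup X] [MeasurableSpace X]

theorem rieszEnergy_mono (s : ℝ) {μ ν : Measure X} (h : μ ≤ ν) :
    rieszEnergy s μ ≤ rieszEnergy s ν :=
  lintegral_mono' h fun _ => lintegral_mono' h le_rfl

variable [OpensMeasurableSpace X]

theorem measure_ball_sq_le_rieszEnergy {s : ℝ} (hs : 0 ≤ s) (μ : Measure X) (z : X) :
    μ (ball z 2⁻¹) ^ 2 ≤ rieszEnergy s μ := by
  have hone {x y : X} (hx : x ∈ ball z 2⁻¹) (hy : y ∈ ball z 2⁻¹) : 1 ≤ ‖x - y‖ₑ ^ (-s) := by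
    have hxy : dist x y < 2⁻¹ + 2⁻¹ :=
      (dist_triangle_right x y z).trans_lt (add_lt_add (mem_ball.1 hx) (mem_ball.1 hy))
    rw [ENNReal.rpow_neg, ENNReal.one_le_inv]
    refine ENNReal.rpow_le_one ?_ hs
    rw [← ofReal_norm, ← dist_eq_norm, ENNReal.ofReal_le_one]
    linarith
  calc μ (ball z 2⁻¹) ^ 2
      = ∫⁻ _ in ball z 2⁻¹, ∫⁻ _ in ball z 2⁻¹, 1 ∂μ ∂μ := by simp [sq]
    _ ≤ ∫⁻ x in ball z 2⁻¹, ∫⁻ y in ball z 2⁻¹, ‖x - y‖ₑ ^ (-s) ∂μ ∂μ :=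
        setLIntegral_mono' measurableSet_ball fun x hx =>
          setLIntegral_mono' measurableSet_ball fun y hy => hone hx hy
    _ ≤ rieszEnergy s μ := rieszEnergy_mono s Measure.restrict_le_self

theorem isLocallyFiniteMeasure_of_rieszEnergy_ne_top {s : ℝ} (hs : 0 ≤ s) {μ : Measure X}
    (hμ : rieszEnergy s μ ≠ ∞) : IsLocallyFiniteMeasure μ :=
  ⟨fun z => ⟨ball z 2⁻¹, ball_mem_nhds z (by norm_num), by
    have hsq := (measure_ball_sq_le_rieszEnergy hs μ z).trans_lt hμ.lt_top
    exact (ENNReal.pow_lt_top_iff.1 hsq).resolve_right two_ne_zero⟩⟩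

end RieszEnergy

section Projections

theorem map_compl_image_eq_zero {X Y : Type*} [MeasurableSpace X] [MeasurableSpace Y]
    {μ : Measure X} {f : X → Y} (hf : Measurable f) {K : Set X} (hfK : MeasurableSet (f '' K))
    (hK : μ Kᶜ = 0) : μ.map f (f '' K)ᶜ = 0 := by
  rw [Measure.map_apply hf hfK.compl, preimage_compl]
  exact measure_mono_null (compl_subset_compl.2 (subset_preimage_image f K)) hK

variable {E : Type*} [NormedAddCommGroup E] [InnerProductSpace ℝ E] [FiniteDimensional ℝ E]
  [MeasurableSpace E] [BorelSpace E] {μ ν : Measure E}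

theorem measurableSet_abs_inner_sub_le (δ : ℝ) :
    MeasurableSet {q : E × E × E | |⟪q.2.1 - q.2.2, q.1⟫| ≤ δ} :=
  (isClosed_le (by fun_prop) continuous_const).measurableSet

section SFinite

variable [SFinite μ] [SFinite ν]

theorem diagonalRatio_map_inner (v : E) (δ : ℝ) :
    diagonalRatio (μ.map (⟪·, v⟫)) (ν.map (⟪·, v⟫)) δ =
      (ENNReal.ofReal (2 * δ))⁻¹ * (μ.prod ν) {p | |⟪p.1 - p.2, v⟫| ≤ δ} := by
  have hv : Measurable fun x : E => ⟪x, v⟫ := by fun_prop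
  rw [diagonalRatio, Measure.map_prod_map _ _ hv hv, Measure.map_apply (hv.prodMap hv)
    (measurableSet_le measurable_dist measurable_const)]
  simp only [preimage_ofPred_eq, Prod.map_fst, Prod.map_snd, Real.dist_eq, inner_sub_left]

theorem measurable_diagonalRatio_map_inner (δ : ℝ) :
    Measurable fun v : E => diagonalRatio (μ.map (⟪·, v⟫)) (ν.map (⟪·, v⟫)) δ := by
  simp only [diagonalRatio_map_inner]
  exact (measurable_measure_prodMk_left (ν := μ.prod ν)
    (measurableSet_abs_inner_sub_le δ)).const_mul _

theorem lintegral_diagonalRatio_map_inner (γ : Measure E) [SFinite γ] (δ : ℝ) :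
    ∫⁻ v, diagonalRatio (μ.map (⟪·, v⟫)) (ν.map (⟪·, v⟫)) δ ∂γ =
      (ENNReal.ofReal (2 * δ))⁻¹ * ∫⁻ p, γ {v | |⟪p.1 - p.2, v⟫| ≤ δ} ∂(μ.prod ν) := by
  have hmeas := measurableSet_abs_inner_sub_le (E := E) δ
  simp only [diagonalRatio_map_inner]
  refine (lintegral_const_mul _ (measurable_measure_prodMk_left (ν := μ.prod ν) hmeas)).trans ?_
  exact congrArg _ <| (Measure.prod_apply hmeas).symm.trans (Measure.prod_apply_symm hmeas)

theorem lintegral_diagonalRatio_map_inner_le_rieszEnergy {δ : ℝ} (hδ : 0 < δ) :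
    ∫⁻ v, diagonalRatio (μ.map (⟪·, v⟫)) (μ.map (⟪·, v⟫)) δ ∂(stdGaussian E) ≤
      rieszEnergy 1 μ := by
  have hmeas : Measurable fun p : E × E => ‖p.1 - p.2‖ₑ⁻¹ := by fun_prop
  rw [lintegral_diagonalRatio_map_inner,
    ENNReal.inv_mul_le_iff (by simp [hδ]) ENNReal.ofReal_ne_top]
  calc ∫⁻ p, stdGaussian E {v | |⟪p.1 - p.2, v⟫| ≤ δ} ∂(μ.prod μ)
      ≤ ∫⁻ p, ENNReal.ofReal (2 * δ) * ‖p.1 - p.2‖ₑ⁻¹ ∂(μ.prod μ) :=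
        lintegral_mono fun p => stdGaussian_abs_inner_le_le_mul_inv_enorm _ hδ
    _ = ENNReal.ofReal (2 * δ) * rieszEnergy 1 μ := by
        rw [lintegral_const_mul _ hmeas, lintegral_prod _ hmeas.aemeasurable]
        simp only [rieszEnergy, ENNReal.rpow_neg_one]

theorem le_lintegral_diagonalRatio_map_inner {R δ : ℝ} (hδ : 0 < δ) (hδR : δ ≤ R)
    (hR : ∀ᵐ p ∂(μ.prod ν), ‖p.1 - p.2‖ ≤ R) :
    gaussianPDF 0 1 1 * ENNReal.ofReal R⁻¹ * (μ univ * ν univ) ≤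
      ∫⁻ v, diagonalRatio (μ.map (⟪·, v⟫)) (ν.map (⟪·, v⟫)) δ ∂(stdGaussian E) := by
  rw [lintegral_diagonalRatio_map_inner, mul_comm (ENNReal.ofReal _)⁻¹, ← div_eq_mul_inv,
    ENNReal.le_div_iff_mul_le (Or.inl (by simp [hδ])) (Or.inl ENNReal.ofReal_ne_top)]
  calc gaussianPDF 0 1 1 * ENNReal.ofReal R⁻¹ * (μ univ * ν univ) * ENNReal.ofReal (2 * δ)
      = ∫⁻ _, ENNReal.ofReal (2 * δ) * (gaussianPDF 0 1 1 * ENNReal.ofReal R⁻¹) ∂(μ.prod ν) := by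
        rw [lintegral_const, ← univ_prod_univ, Measure.prod_prod]
        ring
    _ ≤ ∫⁻ p, stdGaussian E {v | |⟪p.1 - p.2, v⟫| ≤ δ} ∂(μ.prod ν) :=
        lintegral_mono_ae (hR.mono fun p hp => mul_le_stdGaussian_abs_inner_le hδ hδR hp)

theorem lintegral_liminf_diagonalRatio_map_inner_le_rieszEnergy {δ : ℕ → ℝ}
    (hδ : Tendsto δ atTop (𝓝[>] 0)) :
    ∫⁻ v, liminf (fun k => diagonalRatio (μ.map (⟪·, v⟫)) (μ.map (⟪·, v⟫)) (δ k)) atTop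
      ∂(stdGaussian E) ≤ rieszEnergy 1 μ :=
  (lintegral_liminf_le fun k => measurable_diagonalRatio_map_inner (δ k)).trans <|
    liminf_le_of_frequently_le' <| (hδ.eventually self_mem_nhdsWithin).frequently.mono fun _ hk =>
      lintegral_diagonalRatio_map_inner_le_rieszEnergy hk

end SFinite

variable [IsFiniteMeasure μ] [IsFiniteMeasure ν]

theorem tendsto_lintegral_diagonalRatio_map_inner_zero (hμ : rieszEnergy 1 μ ≠ ∞)
    (hν : rieszEnergy 1 ν ≠ ∞) {K L : Set E} (hK : IsCompact K) (hL : IsCompact L)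
    (hμK : μ Kᶜ = 0) (hνL : ν Lᶜ = 0)
    (hnull : ∀ᵐ v ∂(stdGaussian E), volume ((⟪·, v⟫) '' K ∩ (⟪·, v⟫) '' L) = 0) :
    Tendsto
      (fun δ => ∫⁻ v, diagonalRatio (μ.map (⟪·, v⟫)) (ν.map (⟪·, v⟫)) δ ∂(stdGaussian E))
      (𝓝[>] 0) (𝓝 0) := by
  obtain ⟨δ, hδ⟩ := exists_seq_tendsto (𝓝[>] (0 : ℝ))
  set bound : Measure E → E → ℝ≥0∞ := fun m v =>
    liminf (fun k => diagonalRatio (m.map (⟪·, v⟫)) (m.map (⟪·, v⟫)) (δ k)) atTop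
  have hmeas (m : Measure E) [SFinite m] : Measurable (bound m) :=
    Measurable.liminf fun k => measurable_diagonalRatio_map_inner (δ k)
  have hint {m : Measure E} [SFinite m] (hm : rieszEnergy 1 m ≠ ∞) :
      ∫⁻ v, bound m v ∂(stdGaussian E) ≠ ∞ :=
    ((lintegral_liminf_diagonalRatio_map_inner_le_rieszEnergy hδ).trans_lt hm.lt_top).ne
  have hdensity {m : Measure E} [IsFiniteMeasure m] (hm : rieszEnergy 1 m ≠ ∞) :
      ∀ᵐ v ∂(stdGaussian E), m.map (⟪·, v⟫) ≪ volume ∧ bound m v ≠ ∞ ∧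
        ∫⁻ t, (m.map (⟪·, v⟫)).rnDeriv volume t ^ 2 ≤ bound m v := by
    filter_upwards [ae_lt_top (hmeas m) (hint hm)] with v hv
    have hac := absolutelyContinuous_volume_of_liminf_diagonalRatio_ne_top _ hδ hv.ne
    exact ⟨hac, hv.ne, lintegral_rnDeriv_volume_sq_le_liminf hac hδ⟩
  rw [← lintegral_zero (μ := stdGaussian E)]
  refine tendsto_lintegral_filter_of_dominated_convergence (bound μ + bound ν)
    (Eventually.of_forall measurable_diagonalRatio_map_inner) ?_ ?_ ?_
  · filter_upwards [self_mem_nhdsWithin] with η hη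
    filter_upwards [hdensity hμ, hdensity hν] with v ⟨hacμ, _, hleμ⟩ ⟨hacν, _, hleν⟩
    exact (diagonalRatio_le_lintegral_rnDeriv_sq hacμ hacν hη).trans (add_le_add hleμ hleν)
  · simp only [Pi.add_apply]
    rw [lintegral_add_left (hmeas μ)]
    exact ENNReal.add_ne_top.2 ⟨hint hμ, hint hν⟩
  · filter_upwards [hnull, hdensity hμ, hdensity hν] with v hv ⟨hacμ, htopμ, hleμ⟩
      ⟨hacν, htopν, hleν⟩
    have hcont : Continuous fun x : E => ⟪x, v⟫ := by fun_prop
    have hvK := (hK.image hcont).isClosed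
    have hvL := (hL.image hcont).isClosed
    exact tendsto_diagonalRatio_zero hacμ hacν (ne_top_of_le_ne_top htopμ hleμ)
      (ne_top_of_le_ne_top htopν hleν) hvK hvL
      (map_compl_image_eq_zero hcont.measurable hvK.measurableSet hμK)
      (map_compl_image_eq_zero hcont.measurable hvL.measurableSet hνL) hv

theorem frequently_volume_image_inner_inter_ne_zero [NeZero μ] [NeZero ν]
    (hμ : rieszEnergy 1 μ ≠ ∞) (hν : rieszEnergy 1 ν ≠ ∞) {K L : Set E} (hK : IsCompact K)
    (hL : IsCompact L) (hμK : μ Kᶜ = 0) (hνL : ν Lᶜ = 0) :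
    ∃ᵐ v ∂(stdGaussian E), volume ((⟪·, v⟫) '' K ∩ (⟪·, v⟫) '' L) ≠ 0 := by
  intro hnull
  simp only [not_not] at hnull
  obtain ⟨R, hR⟩ := (hK.prod hL).exists_bound_of_continuousOn
    (continuous_fst.sub continuous_snd).continuousOn
  have hdist : ∀ᵐ p ∂(μ.prod ν), ‖p.1 - p.2‖ ≤ max 1 R := by
    filter_upwards [Measure.quasiMeasurePreserving_fst.ae (mem_ae_iff.2 hμK),
      Measure.quasiMeasurePreserving_snd.ae (mem_ae_iff.2 hνL)] with p hpK hpL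
    exact (hR p ⟨hpK, hpL⟩).trans (le_max_right 1 R)
  have hle : gaussianPDF 0 1 1 * ENNReal.ofReal (max 1 R)⁻¹ * (μ univ * ν univ) ≤ 0 := by
    refine ge_of_tendsto
      (tendsto_lintegral_diagonalRatio_map_inner_zero hμ hν hK hL hμK hνL hnull) ?_
    filter_upwards [Ioc_mem_nhdsGT one_pos] with δ hδ
    exact le_lintegral_diagonalRatio_map_inner hδ.1 (hδ.2.trans (le_max_left 1 R)) hdist
  refine hle.not_gt (ENNReal.mul_pos (ENNReal.mul_pos ?_ ?_).ne' (ENNReal.mul_pos ?_ ?_).ne')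
  · exact (gaussianPDF_pos 0 one_ne_zero 1).ne'
  · exact (ENNReal.ofReal_pos.2 (by positivity)).ne'
  · exact NeZero.ne _
  · exact NeZero.ne _

end Projections

section Directions

variable {E : Type*} [NormedAddCommGroup E] [InnerProductSpace ℝ E]

theorem volume_image_inner_smul_inter (A B : Set E) {c : ℝ} (hc : c ≠ 0) (v : E) :
    volume ((⟪·, c • v⟫) '' A ∩ (⟪·, c • v⟫) '' B) =
      ENNReal.ofReal |c| * volume ((⟪·, v⟫) '' A ∩ (⟪·, v⟫) '' B) := by
  have himage (C : Set E) : (⟪·, c • v⟫) '' C = (c • ·) '' ((⟪·, v⟫) '' C) := by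
    simp only [image_image, real_inner_smul_right, smul_eq_mul]
  rw [himage A, himage B, ← image_inter (smul_right_injective ℝ hc)]
  refine (Measure.addHaar_smul volume c _).trans ?_
  rw [finrank_self, pow_one]

theorem ne_zero_of_volume_image_inner_inter_ne_zero {A B : Set E} {v : E}
    (hv : volume ((⟪·, v⟫) '' A ∩ (⟪·, v⟫) '' B) ≠ 0) : v ≠ 0 := by
  rintro rfl
  refine hv (measure_mono_null ?_ (measure_singleton (0 : ℝ)))
  rintro _ ⟨⟨x, -, rfl⟩, -⟩
  exact inner_zero_right x

variable [FiniteDimensional ℝ E] [MeasurableSpace E] [BorelSpace E]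

theorem stmt_7_general {μ ν : Measure E} (hμ : rieszEnergy 1 μ ≠ ∞) (hν : rieszEnergy 1 ν ≠ ∞)
    {A B : Set E} (hA : MeasurableSet A) (hB : MeasurableSet B) (hμA : μ A ≠ 0) (hνB : ν B ≠ 0) :
    0 < μH[(finrank ℝ E : ℝ) - 1]
      {e : E | ‖e‖ = 1 ∧ 0 < volume ((fun x => ⟪x, e⟫) '' A ∩ (fun x => ⟪x, e⟫) '' B)} := by
  have := isLocallyFiniteMeasure_of_rieszEnergy_ne_top zero_le_one hμ
  have := isLocallyFiniteMeasure_of_rieszEnergy_ne_top zero_le_one hν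
  obtain ⟨K, hKA, hK, hμK⟩ := hA.exists_lt_isCompact (pos_iff_ne_zero.2 hμA)
  obtain ⟨L, hLB, hL, hνL⟩ := hB.exists_lt_isCompact (pos_iff_ne_zero.2 hνB)
  have : IsFiniteMeasure (μ.restrict K) := isFiniteMeasure_restrict.2 hK.measure_ne_top
  have : IsFiniteMeasure (ν.restrict L) := isFiniteMeasure_restrict.2 hL.measure_ne_top
  have : NeZero (μ.restrict K) := ⟨Measure.restrict_eq_zero.not.2 hμK.ne'⟩
  have : NeZero (ν.restrict L) := ⟨Measure.restrict_eq_zero.not.2 hνL.ne'⟩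
  have hoverlap := frequently_volume_image_inner_inter_ne_zero
    (ne_top_of_le_ne_top hμ (rieszEnergy_mono 1 (Measure.restrict_le_self (s := K))))
    (ne_top_of_le_ne_top hν (rieszEnergy_mono 1 (Measure.restrict_le_self (s := L)))) hK hL
    (by simp [Measure.restrict_apply hK.measurableSet.compl])
    (by simp [Measure.restrict_apply hL.measurableSet.compl])
  rw [pos_iff_ne_zero]
  intro hnull
  obtain ⟨v, hvKL, hv⟩ := (hoverlap.and_eventually <|
    stdGaussian_absolutelyContinuous_volume.ae_le
      (ae_normalize_notMem_of_hausdorffMeasure_eq_zero volume hnull)).exists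
  have hv0 := ne_zero_of_volume_image_inner_inter_ne_zero hvKL
  refine hv ⟨NormedSpace.norm_normalize hv0, ?_⟩
  have hpos : 0 < volume ((⟪·, v⟫) '' A ∩ (⟪·, v⟫) '' B) :=
    (pos_iff_ne_zero.2 hvKL).trans_le (by gcongr)
  rw [NormedSpace.normalize, volume_image_inner_smul_inter _ _ (by simpa using hv0)]
  exact ENNReal.mul_pos (by simpa using hv0) hpos.ne'

end Directions

theorem sptm_eq_support (n : ℕ) (μ : Measure (EuclideanSpace ℝ (Fin n))) :
    sptm n μ = μ.support := by
  ext x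
  rw [nhds_basis_ball.mem_measureSupport]
  rfl

theorem measurableSet_sptm (n : ℕ) (μ : Measure (EuclideanSpace ℝ (Fin n))) :
    MeasurableSet (sptm n μ) :=
  sptm_eq_support n μ ▸ Measure.isClosed_support.measurableSet

theorem measure_sptm_ne_zero {n : ℕ} {μ : Measure (EuclideanSpace ℝ (Fin n))} (hμ : μ ≠ 0) :
    μ (sptm n μ) ≠ 0 := by
  rw [sptm_eq_support, measure_of_measure_compl_eq_zero Measure.measure_compl_support]
  exact Measure.measure_univ_ne_zero.2 hμ

theorem stmt_7 (n : ℕ) (hn : 2 ≤ n)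
    (μ ν : Measure (EuclideanSpace ℝ (Fin n)))
    [IsFiniteMeasure μ] [IsFiniteMeasure ν] (hμ0 : μ ≠ 0) (hν0 : ν ≠ 0)
    (hμc : IsCompact (sptm n μ)) (hνc : IsCompact (sptm n ν))
    (hμe : energyI n 1 μ < ∞) (hνe : energyI n 1 ν < ∞) :
    0 < μH[(n : ℝ) - 1]
      {e : EuclideanSpace ℝ (Fin n) | ‖e‖ = 1 ∧
        0 < volume ((fun x => ⟪x, e⟫) '' sptm n μ ∩ (fun x => ⟪x, e⟫) '' sptm n ν)} := by
  simpa only [finrank_euclideanSpace_fin] using stmt_7_general hμe.ne hνe.ne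
    (measurableSet_sptm n μ) (measurableSet_sptm n ν) (measure_sptm_ne_zero hμ0)
    (measure_sptm_ne_zero hν0)
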